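/- Let α ∈ (0, 1/2), z = Φ⁻¹(1-α), let m be a nonzero real number, σ > 0, and N a positive integer. Define the updated sample size N' = ⌈N σ² z² / m²⌉ and the reduced standard deviation σ' = √(N σ² / N'). Then Φ(|m|/σ') ≥ 1-α; consequently, if g is a real random variable with distribution N(m, σ'²), then P(m·g > 0) ≥ 1-α. -/

import Mathlib

/-!
Rounding up gives `z² σ'² ≤ m²`, so `z ≤ |m| / σ'`, and `Φ` is monotone. For the probability,
`m g` has law `N(m², m² σ'²)`, so by symmetry of the normal law it is positive with probability
`Φ(m² / (|m| σ')) = Φ(|m| / σ')`; no case distinction on the sign of `m` is needed.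
-/

open MeasureTheory ProbabilityTheory

/-- `Φ`, the cumulative distribution function of the standard normal distribution `N(0,1)`. -/
noncomputable def stdNormalCDF (x : ℝ) : ℝ :=
  ProbabilityTheory.cdf (ProbabilityTheory.gaussianReal 0 1) x

open scoped NNReal

lemma stdNormalCDF_mono : Monotone stdNormalCDF :=
  monotone_cdf _

lemma stdNormalCDF_nonneg (x : ℝ) : 0 ≤ stdNormalCDF x :=
  cdf_nonneg _ x

-- Reflecting (`μ - x`, not `x - μ`) turns upper tails into lower tails, which the cdf measures.
lemma gaussianReal_map_mean_sub_div_sqrt (μ : ℝ) {v : ℝ≥0} (hv : v ≠ 0) :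
    (gaussianReal μ v).map (fun x ↦ (μ - x) / √v) = gaussianReal 0 1 := by
  have hvar : v / .mk (√v ^ 2) (sq_nonneg _) = 1 := by
    ext
    simp [hv]
  calc (gaussianReal μ v).map (fun x ↦ (μ - x) / √v)
      = ((gaussianReal μ v).map (μ - ·)).map (· / √v) :=
        (Measure.map_map (g := (· / √v)) (f := (μ - ·)) (by fun_prop) (by fun_prop)).symm
    _ = gaussianReal 0 1 := by
        rw [gaussianReal_map_const_sub, gaussianReal_map_div_const, hvar, sub_self, zero_div]

lemma gaussianReal_Ioi (μ : ℝ) {v : ℝ≥0} (hv : v ≠ 0) (x : ℝ) :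
    gaussianReal μ v (Set.Ioi x) = ENNReal.ofReal (stdNormalCDF ((μ - x) / √v)) := by
  have := nullSingletonClass_gaussianReal (μ := μ) hv
  have hpre : (fun y ↦ (μ - y) / √v) ⁻¹' Set.Iic ((μ - x) / √v) = Set.Ici x := by
    have hsqrt : 0 < √(v : ℝ) := Real.sqrt_pos.2 (NNReal.coe_pos.2 (pos_iff_ne_zero.2 hv))
    ext y
    simp only [Set.mem_preimage, Set.mem_Iic, Set.mem_Ici, div_le_div_iff_of_pos_right hsqrt,
      sub_le_sub_iff_left]
  calc gaussianReal μ v (Set.Ioi x)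
      = gaussianReal μ v (Set.Ici x) := measure_congr Ioi_ae_eq_Ici
    _ = gaussianReal 0 1 (Set.Iic ((μ - x) / √v)) := by
        rw [← gaussianReal_map_mean_sub_div_sqrt μ hv,
          Measure.map_apply (by fun_prop) measurableSet_Iic, hpre]
    _ = ENNReal.ofReal (stdNormalCDF ((μ - x) / √v)) := (ofReal_cdf _ _).symm

lemma stdNormalCDF_neg (x : ℝ) : stdNormalCDF (-x) = 1 - stdNormalCDF x := by
  have hIoi : (gaussianReal 0 1).real (Set.Ioi x) = stdNormalCDF (-x) := by
    rw [measureReal_def, gaussianReal_Ioi 0 one_ne_zero,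
      ENNReal.toReal_ofReal (stdNormalCDF_nonneg _), NNReal.coe_one, Real.sqrt_one, div_one,
      zero_sub]
  rw [← hIoi, ← Set.compl_Iic, probReal_compl_eq_one_sub measurableSet_Iic, ← cdf_eq_real,
    stdNormalCDF]

lemma stdNormalCDF_zero : stdNormalCDF 0 = 1 / 2 := by
  have h := stdNormalCDF_neg 0
  rw [neg_zero] at h
  linarith

lemma pos_of_half_lt_stdNormalCDF {x : ℝ} (hx : 1 / 2 < stdNormalCDF x) : 0 < x :=
  stdNormalCDF_mono.reflect_lt (stdNormalCDF_zero.trans_lt hx)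

lemma gaussianReal_setOf_mul_pos {m : ℝ} (hm : m ≠ 0) {v : ℝ≥0} (hv : v ≠ 0) :
    gaussianReal m v {x | 0 < m * x} = ENNReal.ofReal (stdNormalCDF (|m| / √v)) := by
  have hvar : NNReal.mk (m ^ 2) (sq_nonneg m) * v ≠ 0 :=
    mul_ne_zero (fun h ↦ pow_ne_zero 2 hm (congrArg NNReal.toReal h)) hv
  have hratio : (m * m - 0) / √(NNReal.mk (m ^ 2) (sq_nonneg m) * v : ℝ≥0) = |m| / √v := by
    rw [NNReal.coe_mul, NNReal.coe_mk, Real.sqrt_mul (sq_nonneg m), Real.sqrt_sq_eq_abs, sub_zero,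
      ← abs_mul_abs_self m, mul_div_mul_left _ _ (abs_ne_zero.2 hm)]
  calc gaussianReal m v {x | 0 < m * x}
      = (gaussianReal m v).map (m * ·) (Set.Ioi 0) :=
        (Measure.map_apply (measurable_const_mul m) measurableSet_Ioi).symm
    _ = ENNReal.ofReal (stdNormalCDF (|m| / √v)) := by
        rw [gaussianReal_map_const_mul, gaussianReal_Ioi _ hvar, hratio]

lemma measure_mul_pos_of_map_eq_gaussianReal {Ω : Type*} [MeasurableSpace Ω] {P : Measure Ω}
    {g : Ω → ℝ} {m : ℝ} (hm : m ≠ 0) {v : ℝ≥0} (hv : v ≠ 0) (hg : P.map g = gaussianReal m v) :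
    P {ω | 0 < m * g ω} = ENNReal.ofReal (stdNormalCDF (|m| / √v)) := by
  have hg_meas : AEMeasurable g P :=
    .of_map_ne_zero (hg ▸ IsProbabilityMeasure.ne_zero _)
  have hs : MeasurableSet {x : ℝ | 0 < m * x} := measurableSet_lt (by fun_prop) (by fun_prop)
  rw [← gaussianReal_setOf_mul_pos hm hv, ← hg, Measure.map_apply_of_aemeasurable hg_meas hs,
    Set.preimage_ofPred_eq]

lemma le_abs_div_sqrt_div {a m n z : ℝ} (hm : m ≠ 0) (ha : 0 < a) (hn : 0 < n)
    (h : a * z ^ 2 / m ^ 2 ≤ n) : z ≤ |m| / √(a / n) := by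
  rw [div_le_iff₀ (by positivity)] at h
  rw [le_div_iff₀ (by positivity)]
  refine Real.le_sqrt_of_sq_le ?_ |>.trans_eq (Real.sqrt_sq_eq_abs m)
  rw [mul_pow, Real.sq_sqrt (by positivity), mul_div_assoc', div_le_iff₀ hn]
  linarith

theorem sample_size_update_descent_general {z m σ N N' σ' : ℝ} (hz : z ≠ 0) (hm : m ≠ 0)
    (hσ : σ ≠ 0) (hN : 0 < N) (hN' : N * σ ^ 2 * z ^ 2 / m ^ 2 ≤ N')
    (hσ' : σ' = √(N * σ ^ 2 / N')) {Ω : Type*} [MeasurableSpace Ω] {P : Measure Ω} {g : Ω → ℝ}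
    (hg : P.map g = gaussianReal m (σ' ^ 2).toNNReal) :
    stdNormalCDF z ≤ stdNormalCDF (|m| / σ') ∧
      ENNReal.ofReal (stdNormalCDF z) ≤ P {ω | 0 < m * g ω} := by
  have hN'_pos : 0 < N' := lt_of_lt_of_le (by positivity) hN'
  have hσ'_pos : 0 < σ' := hσ' ▸ by positivity
  have hcdf : stdNormalCDF z ≤ stdNormalCDF (|m| / σ') :=
    hσ' ▸ stdNormalCDF_mono (le_abs_div_sqrt_div hm (by positivity) hN'_pos hN')
  have hprob : P {ω | 0 < m * g ω} = ENNReal.ofReal (stdNormalCDF (|m| / σ')) := by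
    have hv : (σ' ^ 2).toNNReal ≠ 0 := (Real.toNNReal_pos.2 (by positivity)).ne'
    rw [measure_mul_pos_of_map_eq_gaussianReal hm hv hg, Real.coe_toNNReal _ (sq_nonneg σ'),
      Real.sqrt_sq hσ'_pos.le]
  exact ⟨hcdf, hprob ▸ ENNReal.ofReal_le_ofReal hcdf⟩

/-- Let `α ∈ (0, 1/2)`, `z = Φ⁻¹(1-α)`, `m ≠ 0`, `σ > 0` and `N` a positive integer.
With the updated sample size `N' = ⌈N σ² z² / m²⌉` and the reduced standard deviation
`σ' = √(N σ² / N')`, one has `Φ(|m|/σ') ≥ 1-α`; consequently, if `g` is a real random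
variable with distribution `N(m, σ'²)`, then `P(m·g > 0) ≥ 1-α`. -/
theorem sample_size_update_descent (α : ℝ) (hα : α ∈ Set.Ioo (0 : ℝ) (1 / 2))
    (z : ℝ) (hz : stdNormalCDF z = 1 - α) (m : ℝ) (hm : m ≠ 0) (σ : ℝ) (hσ : 0 < σ)
    (N : ℕ) (hN : 0 < N)
    (N' : ℕ) (hN' : N' = ⌈(N : ℝ) * σ ^ 2 * z ^ 2 / m ^ 2⌉₊)
    (σ' : ℝ) (hσ'def : σ' = Real.sqrt ((N : ℝ) * σ ^ 2 / (N' : ℝ)))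
    {Ω : Type*} [MeasurableSpace Ω] (P : Measure Ω) [IsProbabilityMeasure P]
    (g : Ω → ℝ) (hg : Measure.map g P = gaussianReal m ((σ' ^ 2).toNNReal)) :
    1 - α ≤ stdNormalCDF (|m| / σ') ∧
      ENNReal.ofReal (1 - α) ≤ P {ω | 0 < m * g ω} := by
  have hz_pos : 0 < z := pos_of_half_lt_stdNormalCDF (by linarith [hα.2])
  exact hz ▸ sample_size_update_descent_general hz_pos.ne' hm hσ.ne' (Nat.cast_pos.2 hN)
    (hN' ▸ Nat.le_ceil _) hσ'def hg
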